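/- Let X be an infinite-dimensional closed subspace of Tsirelson's space T. Then there exists a sequence (x_i) in X having a spreading model 1-equivalent to the unit vector basis of ℓ₁, i.e. a spreading model (s_i) with ‖Σ_i a_i s_i‖ = Σ_i |a_i| for all finitely supported scalars. -/

import Mathlib

/-!
Write `|x|_m` (`splitNorm m x`) for the supremum of `(1/2) ∑ ‖E_i x‖` over all families
`E_1 < ⋯ < E_m`, without the admissibility constraint `m ≤ E_1`.  If `x` is supported on `[m, ∞)`
then `|x|_m ≤ ‖x‖`, and `|·|_m` is superadditive over successive blocks when the numbers of pieces
are added up (`sum_splitNorm_le`).  Consequently a sequence of blocks `z k` of norm almost `1`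
generates an isometric `ℓ₁` spreading model as soon as `lim_m liminf_k |z k|_m = 1`: any `n` blocks
far enough out can be normed simultaneously by one admissible family of `n * m` sets
(`hasL1SpreadingModel_of_blocks`).

To find such blocks in `X`, start with normalized blocks `b k` close to `X`
(`exists_almost_block`) and pass to a subsequence such that `|b k|_m` converges to some `α' m` for
every `m`; let `α = sup_m α' m`, a number in `[1/2, 1]`.  In a sufficiently sparse sum `∑ a_i b_i`,
an admissible family that first meets `b_i` has at most `max supp b_i` members, so it measures
`b_i` by at most `1` and every later `b_l` by at most about `α`.  Thus the norm of the sum is at most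
about `max_i (a_i + α ∑_{l > i} a_l)`.  With the increasing geometric weights
`a_i = (1 - α) ^ (K - 1 - i)`, `i < K`, all these quantities equal `1`
(`tsirelsonNorm_geom_le`), whereas the last `M` blocks, split into `m` pieces each, show that
`|·|_{M m}` of the sum is at least about
`α' m * ∑_{d < M} (1 - α) ^ d = (α' m / α) * (1 - (1 - α) ^ M)`, which is close to `1`
uniformly in `K` (`le_splitNorm_geom`).  This is `exists_good_vectors`.
-/

noncomputable section

/-- A basic sequence: there is a constant `C` dominating all projections onto
initial segments. -/
def IsBasicSeq {S : Type*} [NormedAddCommGroup S] [NormedSpace ℝ S] (s : ℕ → S) : Prop :=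
  ∃ C : ℝ, ∀ m n : ℕ, m ≤ n → ∀ a : ℕ → ℝ,
    ‖∑ i ∈ Finset.range m, a i • s i‖ ≤ C * ‖∑ i ∈ Finset.range n, a i • s i‖

/-- `s` is a spreading model of `x`. -/
def IsSpreadingModel {X : Type*} [NormedAddCommGroup X] [NormedSpace ℝ X]
    {S : Type*} [NormedAddCommGroup S] [NormedSpace ℝ S]
    (x : ℕ → X) (s : ℕ → S) : Prop :=
  IsBasicSeq s ∧
  ∃ ε : ℕ → ℝ, (∀ n, 0 < ε n) ∧ Antitone ε ∧ Filter.Tendsto ε Filter.atTop (nhds 0) ∧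
    ∀ (n : ℕ) (a : Fin n → ℝ), (∀ i, |a i| ≤ 1) →
      ∀ k : Fin n → ℕ, StrictMono k → (∀ i, n ≤ k i) →
        |‖∑ i, a i • x (k i)‖ - ‖∑ i, a i • s i‖| < ε n

/-- `e` is a Schauder basis of `X`: every vector has a unique representation as a
norm-convergent series. -/
def IsSchauderBasis {X : Type*} [NormedAddCommGroup X] [NormedSpace ℝ X] (e : ℕ → X) : Prop :=
  ∀ x : X, ∃! a : ℕ → ℝ,
    Filter.Tendsto (fun n => ∑ i ∈ Finset.range n, a i • e i) Filter.atTop (nhds x)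

/-- `y` is a block basis of the basis `e`: `y j = ∑_{i ∈ E j} a i • e i` with the
finite sets `E j` nonempty and successive (`max E j < min E (j+1)`), and `y j ≠ 0`. -/
def IsBlockBasis {X : Type*} [NormedAddCommGroup X] [NormedSpace ℝ X]
    (e : ℕ → X) (y : ℕ → X) : Prop :=
  ∃ (E : ℕ → Finset ℕ) (a : ℕ → ℝ),
    (∀ j, (E j).Nonempty) ∧
    (∀ j, ∀ p ∈ E j, ∀ q ∈ E (j + 1), p < q) ∧
    (∀ j, y j = ∑ i ∈ E j, a i • e i) ∧
    (∀ j, y j ≠ 0)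


/-- sup norm of a finitely supported sequence -/
def supNorm (x : ℕ →₀ ℝ) : ℝ := ⨆ i, |x i|

/-- coordinate restriction of `x` to the finite set `E` -/
def restr (E : Finset ℕ) (x : ℕ →₀ ℝ) : ℕ →₀ ℝ := x.filter (· ∈ E)

/-- `n ≤ E 0 < E 1 < ⋯` : an admissible family of `m` finite sets of naturals, all of
whose elements are `≥ n`. -/
def AdmissibleOn (n m : ℕ) (E : Fin m → Finset ℕ) : Prop :=
  (∀ i j : Fin m, i < j → ∀ a ∈ E i, ∀ b ∈ E j, a < b) ∧
  (∀ i : Fin m, ∀ a ∈ E i, n ≤ a)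

/-- `n ≤ E 0 < ⋯ < E (n-1)` -/
def Admissible (n : ℕ) (E : Fin n → Finset ℕ) : Prop := AdmissibleOn n n E

/-- the iteration `‖x‖₀ = ‖x‖_∞`,
`‖x‖_{k+1} = max (‖x‖_∞, sup {(1/2) ∑ ‖E_i x‖_k : n ≤ E_1 < ⋯ < E_n})`. -/
def tsAux : ℕ → (ℕ →₀ ℝ) → ℝ
  | 0, x => supNorm x
  | k + 1, x => max (supNorm x)
      (sSup {r : ℝ | ∃ (n : ℕ) (E : Fin n → Finset ℕ), 0 < n ∧ Admissible n E ∧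
        r = (1 / 2) * ∑ i, tsAux k (restr (E i) x)})

/-- the Tsirelson norm `‖x‖_T = lim_k ‖x‖_k` on finitely supported sequences -/
def tsirelsonNorm (x : ℕ →₀ ℝ) : ℝ := ⨆ k, tsAux k x

/-- A spreading model `1`-equivalent to the unit vector basis of `ℓ₁`. -/
def HasL1SpreadingModel {X : Type*} [NormedAddCommGroup X] [NormedSpace ℝ X]
    (x : ℕ → X) : Prop :=
  ∃ (S : Type) (_ : NormedAddCommGroup S), ∃ (_ : NormedSpace ℝ S) (_ : CompleteSpace S),
    ∃ t : ℕ → S, IsSpreadingModel x t ∧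
      ∀ (n : ℕ) (a : Fin n → ℝ), ‖∑ i, a i • t i‖ = ∑ i, |a i|

/-! ### The fixed-point description of the Tsirelson norm -/

lemma restr_apply (E : Finset ℕ) (x : ℕ →₀ ℝ) (j : ℕ) :
    restr E x j = if j ∈ E then x j else 0 := by
  simp [restr, Finsupp.filter_apply]

lemma restr_restr (E F : Finset ℕ) (x : ℕ →₀ ℝ) : restr E (restr F x) = restr (E ∩ F) x := by
  ext j
  simp only [restr_apply, Finset.mem_inter]
  split_ifs <;> tauto

lemma restr_add (E : Finset ℕ) (x y : ℕ →₀ ℝ) : restr E (x + y) = restr E x + restr E y :=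
  Finsupp.filter_add

lemma restr_smul (E : Finset ℕ) (c : ℝ) (x : ℕ →₀ ℝ) : restr E (c • x) = c • restr E x :=
  Finsupp.filter_smul

lemma restr_sum {ι : Type*} (E : Finset ℕ) (s : Finset ι) (x : ι → ℕ →₀ ℝ) :
    restr E (∑ i ∈ s, x i) = ∑ i ∈ s, restr E (x i) :=
  Finsupp.filter_sum _ _

lemma restr_eq_self {E : Finset ℕ} {x : ℕ →₀ ℝ} (h : x.support ⊆ E) : restr E x = x := by
  ext j
  rw [restr_apply]
  split_ifs with hj
  · rfl
  · exact (Finsupp.notMem_support_iff.1 fun h' => hj (h h')).symm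

lemma restr_eq_zero {E : Finset ℕ} {x : ℕ →₀ ℝ} (h : ∀ j ∈ x.support, j ∉ E) :
    restr E x = 0 := by
  ext j
  rw [restr_apply]
  split_ifs with hj
  · exact Finsupp.notMem_support_iff.1 fun h' => h j h' hj
  · rfl

lemma support_restr_subset (E : Finset ℕ) (x : ℕ →₀ ℝ) : (restr E x).support ⊆ E := by
  intro j hj
  by_contra h
  exact (Finsupp.mem_support_iff.1 hj) (by rw [restr_apply, if_neg h])

/-- The `ℓ₁` norm of a finitely supported sequence; it bounds all the norms `tsAux k`. -/
def ellOne (x : ℕ →₀ ℝ) : ℝ := ∑ j ∈ x.support, |x j|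

lemma ellOne_nonneg (x : ℕ →₀ ℝ) : 0 ≤ ellOne x := Finset.sum_nonneg fun _ _ => abs_nonneg _

lemma abs_le_ellOne (x : ℕ →₀ ℝ) (j : ℕ) : |x j| ≤ ellOne x := by
  by_cases hj : j ∈ x.support
  · exact Finset.single_le_sum (f := fun j => |x j|) (fun _ _ => abs_nonneg _) hj
  · rw [Finsupp.notMem_support_iff.1 hj, abs_zero]
    exact ellOne_nonneg x

lemma abs_le_supNorm (x : ℕ →₀ ℝ) (j : ℕ) : |x j| ≤ supNorm x :=
  le_ciSup (f := fun j => |x j|) ⟨ellOne x, by rintro _ ⟨i, rfl⟩; exact abs_le_ellOne x i⟩ j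

lemma supNorm_nonneg (x : ℕ →₀ ℝ) : 0 ≤ supNorm x := (abs_nonneg _).trans (abs_le_supNorm x 0)

lemma sum_ellOne_restr_le {n : ℕ} (E : Fin n → Finset ℕ)
    (hE : ∀ i j : Fin n, i < j → ∀ a ∈ E i, ∀ b ∈ E j, a < b) (x : ℕ →₀ ℝ) :
    ∑ i, ellOne (restr (E i) x) ≤ ellOne x := by
  have h1 : ∀ i, ellOne (restr (E i) x) = ∑ j ∈ x.support.filter (· ∈ E i), |x j| := by
    intro i
    have hs : (restr (E i) x).support = x.support.filter (· ∈ E i) := by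
      simp [restr, Finsupp.support_filter]
    rw [ellOne, hs]
    refine Finset.sum_congr rfl fun j hj => ?_
    rw [restr_apply, if_pos (Finset.mem_filter.1 hj).2]
  simp_rw [h1]
  rw [← Finset.sum_biUnion]
  · exact Finset.sum_le_sum_of_subset_of_nonneg
      (fun j hj => by
        obtain ⟨i, -, hi⟩ := Finset.mem_biUnion.1 hj
        exact (Finset.mem_filter.1 hi).1) fun _ _ _ => abs_nonneg _
  · intro i _ k _ hik
    refine Finset.disjoint_left.2 fun j hj hj' => ?_
    have a1 := (Finset.mem_filter.1 hj).2
    have a2 := (Finset.mem_filter.1 hj').2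
    rcases lt_or_gt_of_ne hik with h | h
    · exact lt_irrefl _ (hE _ _ h _ a1 _ a2)
    · exact lt_irrefl _ (hE _ _ h _ a2 _ a1)

lemma tsAux_le_ellOne (k : ℕ) (x : ℕ →₀ ℝ) : tsAux k x ≤ ellOne x := by
  induction k generalizing x with
  | zero => exact ciSup_le fun i => abs_le_ellOne x i
  | succ k ih =>
    rw [tsAux]
    refine max_le (ciSup_le fun i => abs_le_ellOne x i) (Real.sSup_le ?_ (ellOne_nonneg x))
    rintro r ⟨n, E, -, hE, rfl⟩
    have h1 : ∑ i, tsAux k (restr (E i) x) ≤ ∑ i, ellOne (restr (E i) x) :=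
      Finset.sum_le_sum fun i _ => ih _
    have h2 := sum_ellOne_restr_le E hE.1 x
    have h3 := ellOne_nonneg x
    linarith

lemma tsAux_split_le (k : ℕ) (x : ℕ →₀ ℝ) {n : ℕ} (hn : 0 < n) {E : Fin n → Finset ℕ}
    (hE : Admissible n E) : (1 / 2) * ∑ i, tsAux k (restr (E i) x) ≤ tsAux (k + 1) x := by
  rw [tsAux]
  refine le_max_of_le_right (le_csSup ⟨ellOne x, ?_⟩ ⟨n, E, hn, hE, rfl⟩)
  rintro r ⟨n, E, -, hE, rfl⟩
  have h1 : ∑ i, tsAux k (restr (E i) x) ≤ ∑ i, ellOne (restr (E i) x) :=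
    Finset.sum_le_sum fun i _ => tsAux_le_ellOne _ _
  have h2 := sum_ellOne_restr_le E hE.1 x
  have h3 := ellOne_nonneg x
  linarith

lemma tsAux_mono (x : ℕ →₀ ℝ) : Monotone fun k => tsAux k x := by
  refine monotone_nat_of_le_succ fun k => ?_
  induction k generalizing x with
  | zero =>
    rw [tsAux, tsAux]
    exact le_max_left _ _
  | succ k ih =>
    conv_lhs => rw [tsAux]
    refine max_le ?_ (Real.sSup_le ?_ ?_)
    · rw [tsAux]
      exact le_max_left _ _
    · rintro r ⟨n, E, hn, hE, rfl⟩
      refine le_trans ?_ (tsAux_split_le (k + 1) x hn hE)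
      gcongr with i
      exact ih _
    · rw [tsAux]
      exact le_max_of_le_left (supNorm_nonneg x)

lemma bddAbove_tsAux (x : ℕ →₀ ℝ) : BddAbove (Set.range fun k => tsAux k x) :=
  ⟨ellOne x, by rintro _ ⟨k, rfl⟩; exact tsAux_le_ellOne k x⟩

lemma tsAux_le_tsirelsonNorm (k : ℕ) (x : ℕ →₀ ℝ) : tsAux k x ≤ tsirelsonNorm x :=
  le_ciSup (bddAbove_tsAux x) k

lemma abs_le_tsirelsonNorm (x : ℕ →₀ ℝ) (j : ℕ) : |x j| ≤ tsirelsonNorm x :=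
  (abs_le_supNorm x j).trans (tsAux_le_tsirelsonNorm 0 x)

lemma tsirelsonNorm_nonneg (x : ℕ →₀ ℝ) : 0 ≤ tsirelsonNorm x :=
  (abs_nonneg _).trans (abs_le_tsirelsonNorm x 0)

/-- One half of the implicit equation of the Tsirelson norm. -/
lemma split_le_tsirelsonNorm (x : ℕ →₀ ℝ) {n : ℕ} (hn : 0 < n) {E : Fin n → Finset ℕ}
    (hE : Admissible n E) :
    (1 / 2) * ∑ i, tsirelsonNorm (restr (E i) x) ≤ tsirelsonNorm x := by
  have h : Filter.Tendsto (fun k => (1 / 2) * ∑ i, tsAux k (restr (E i) x)) Filter.atTop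
      (nhds ((1 / 2) * ∑ i, tsirelsonNorm (restr (E i) x))) :=
    (tendsto_finsetSum _ fun i _ =>
      tendsto_atTop_ciSup (tsAux_mono _) (bddAbove_tsAux _)).const_mul _
  exact le_of_tendsto' h fun k =>
    (tsAux_split_le k x hn hE).trans (tsAux_le_tsirelsonNorm _ x)

/-- The other half of the implicit equation: to bound the Tsirelson norm it is enough to bound
the coordinates and all admissible half-sums. -/
lemma tsirelsonNorm_le {x : ℕ →₀ ℝ} {C : ℝ} (h1 : ∀ j, |x j| ≤ C)
    (h2 : ∀ (n : ℕ) (E : Fin n → Finset ℕ), 0 < n → Admissible n E →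
      (1 / 2) * ∑ i, tsirelsonNorm (restr (E i) x) ≤ C) : tsirelsonNorm x ≤ C := by
  have hC : 0 ≤ C := (abs_nonneg _).trans (h1 0)
  refine ciSup_le fun k => ?_
  cases k with
  | zero => exact ciSup_le h1
  | succ k =>
    rw [tsAux]
    refine max_le (ciSup_le h1) (Real.sSup_le ?_ hC)
    rintro r ⟨n, E, hn, hE, rfl⟩
    refine le_trans ?_ (h2 n E hn hE)
    gcongr with i
    exact tsAux_le_tsirelsonNorm _ _

lemma tsirelsonNorm_restr_le (F : Finset ℕ) (x : ℕ →₀ ℝ) :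
    tsirelsonNorm (restr F x) ≤ tsirelsonNorm x := by
  refine tsirelsonNorm_le (fun j => ?_) fun n E hn hE => ?_
  · rw [restr_apply]
    split_ifs
    · exact abs_le_tsirelsonNorm x j
    · simpa using tsirelsonNorm_nonneg x
  · simp_rw [restr_restr]
    refine split_le_tsirelsonNorm x hn ⟨fun i j hij a ha b hb => ?_, fun i a ha => ?_⟩
    · exact hE.1 i j hij a (Finset.mem_inter.1 ha).1 b (Finset.mem_inter.1 hb).1
    · exact hE.2 i a (Finset.mem_inter.1 ha).1

/-! ### Half-sums over a fixed number of pieces -/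

/-- The supremum of `(1/2) ∑ ‖E_i x‖` over all families `E_1 < ⋯ < E_m` of `m` finite sets,
with no constraint relating `m` to `min E_1` (the bound `0 ≤ E_1` in `AdmissibleOn 0 m` is
vacuous). -/
def splitNorm (m : ℕ) (x : ℕ →₀ ℝ) : ℝ :=
  sSup {r : ℝ | ∃ E : Fin m → Finset ℕ, AdmissibleOn 0 m E ∧
    r = (1 / 2) * ∑ i, tsirelsonNorm (restr (E i) x)}

lemma le_splitNorm {m : ℕ} (x : ℕ →₀ ℝ) {E : Fin m → Finset ℕ}
    (hE : ∀ i j : Fin m, i < j → ∀ a ∈ E i, ∀ b ∈ E j, a < b) :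
    (1 / 2) * ∑ i, tsirelsonNorm (restr (E i) x) ≤ splitNorm m x := by
  refine le_csSup ⟨(1 / 2) * ∑ _i : Fin m, tsirelsonNorm x, ?_⟩
    ⟨E, ⟨hE, fun _ _ _ => Nat.zero_le _⟩, rfl⟩
  rintro r ⟨E, -, rfl⟩
  gcongr with i
  exact tsirelsonNorm_restr_le _ _

lemma splitNorm_nonneg (m : ℕ) (x : ℕ →₀ ℝ) : 0 ≤ splitNorm m x := by
  refine Real.sSup_nonneg ?_
  rintro r ⟨E, -, rfl⟩
  exact mul_nonneg (by norm_num) (Finset.sum_nonneg fun _ _ => tsirelsonNorm_nonneg _)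

lemma exists_lt_split {m : ℕ} {x : ℕ →₀ ℝ} {r : ℝ} (hr : r < splitNorm m x) :
    ∃ E : Fin m → Finset ℕ, (∀ i j : Fin m, i < j → ∀ a ∈ E i, ∀ b ∈ E j, a < b) ∧
      r < (1 / 2) * ∑ i, tsirelsonNorm (restr (E i) x) := by
  obtain ⟨_, ⟨E, hE, rfl⟩, h⟩ := exists_lt_of_lt_csSup
    (by exact ⟨_, fun _ => ∅, ⟨by simp, by simp⟩, rfl⟩) hr
  exact ⟨E, hE.1, h⟩

/-- A vector supported on `[m, ∞)` sees no difference between admissible and unconstrained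
families of `m` sets. -/
lemma splitNorm_le {m : ℕ} {x : ℕ →₀ ℝ} (hx : ∀ j ∈ x.support, m ≤ j) :
    splitNorm m x ≤ tsirelsonNorm x := by
  refine Real.sSup_le ?_ (tsirelsonNorm_nonneg x)
  rintro r ⟨E, hE, rfl⟩
  rcases Nat.eq_zero_or_pos m with rfl | hm
  · simpa using tsirelsonNorm_nonneg x
  · have h : ∀ i, restr (E i) x = restr (E i ∩ x.support) x := fun i => by
      rw [← restr_restr, restr_eq_self subset_rfl]
    simp_rw [h]
    refine split_le_tsirelsonNorm x hm ⟨fun i j hij a ha b hb => ?_, fun i a ha => ?_⟩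
    · exact hE.1 i j hij a (Finset.mem_inter.1 ha).1 b (Finset.mem_inter.1 hb).1
    · exact hx a (Finset.mem_inter.1 ha).2

lemma half_le_splitNorm_one (x : ℕ →₀ ℝ) : (1 / 2) * tsirelsonNorm x ≤ splitNorm 1 x := by
  have h := le_splitNorm (m := 1) x (E := fun _ => x.support)
    (fun i j hij => absurd hij (by simp [Subsingleton.elim i j]))
  simpa [restr_eq_self (subset_refl x.support)] using h

section
variable {V : Type*} [NormedAddCommGroup V] [NormedSpace ℝ V]
  {J : (ℕ →₀ ℝ) →ₗ[ℝ] V}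

lemma tsirelsonNorm_smul (hiso : ∀ x, ‖J x‖ = tsirelsonNorm x) (c : ℝ) (x : ℕ →₀ ℝ) :
    tsirelsonNorm (c • x) = |c| * tsirelsonNorm x := by
  rw [← hiso, ← hiso, map_smul, norm_smul, Real.norm_eq_abs]

lemma tsirelsonNorm_sum_le (hiso : ∀ x, ‖J x‖ = tsirelsonNorm x) {ι : Type*} (s : Finset ι)
    (x : ι → ℕ →₀ ℝ) : tsirelsonNorm (∑ i ∈ s, x i) ≤ ∑ i ∈ s, tsirelsonNorm (x i) := by
  simp_rw [← hiso, map_sum]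
  exact norm_sum_le _ _

/-- Families for successive blocks can be concatenated: if `x` coincides with `c i • b i` on
successive sets `S i`, then families of `m` sets for each of the `M` blocks make up a family of
`M * m` sets for `x`. -/
lemma sum_splitNorm_le (hiso : ∀ x, ‖J x‖ = tsirelsonNorm x) {M m : ℕ} (x : ℕ →₀ ℝ)
    (S : Fin M → Finset ℕ) (c : Fin M → ℝ) (b : Fin M → ℕ →₀ ℝ)
    (hS : ∀ i j : Fin M, i < j → ∀ p ∈ S i, ∀ q ∈ S j, p < q)
    (hx : ∀ i, restr (S i) x = c i • b i) :
    ∑ i, |c i| * splitNorm m (b i) ≤ splitNorm (M * m) x := by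
  refine le_of_forall_pos_sub_le fun ε hε => ?_
  set δ : ℝ := ε / (∑ i, |c i| + 1) with hδ
  have hsum : 0 ≤ ∑ i, |c i| := Finset.sum_nonneg fun _ _ => abs_nonneg _
  have hδ0 : 0 < δ := by positivity
  have hδε : (∑ i, |c i|) * δ ≤ ε := by
    rw [hδ, mul_div_assoc', div_le_iff₀ (by positivity)]
    nlinarith
  choose E hE hlt using fun i => exists_lt_split (sub_lt_self (splitNorm m (b i)) hδ0)
  have key := le_splitNorm (m := M * m) x
    (E := fun t => E (finProdFinEquiv.symm t).1 (finProdFinEquiv.symm t).2 ∩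
      S (finProdFinEquiv.symm t).1) (by
    intro s t hst p hp q hq
    obtain ⟨⟨i, k⟩, rfl⟩ := finProdFinEquiv.surjective s
    obtain ⟨⟨j, l⟩, rfl⟩ := finProdFinEquiv.surjective t
    simp only [Equiv.symm_apply_apply, Finset.mem_inter] at hp hq
    rcases lt_trichotomy i j with h | h | h
    · exact hS i j h p hp.2 q hq.2
    · subst h
      refine hE i k l ?_ p hp.1 q hq.1
      have : (k : ℕ) + m * i < l + m * i := hst
      exact Fin.lt_def.2 (by omega)
    · exfalso
      have h1 : (k : ℕ) + m * i < l + m * j := hst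
      have h2 : (j : ℕ) + 1 ≤ i := h
      have h3 : m * ((j : ℕ) + 1) ≤ m * i := Nat.mul_le_mul_left m h2
      have h4 := l.2
      rw [Nat.mul_add] at h3
      omega)
  rw [← finProdFinEquiv.sum_comp, Fintype.sum_prod_type] at key
  simp only [Equiv.symm_apply_apply, ← restr_restr, hx, restr_smul,
    tsirelsonNorm_smul hiso, ← Finset.mul_sum] at key
  refine le_trans ?_ key
  calc ∑ i, |c i| * splitNorm m (b i) - ε
      ≤ ∑ i, |c i| * splitNorm m (b i) - (∑ i, |c i|) * δ := by linarith
    _ = ∑ i, |c i| * (splitNorm m (b i) - δ) := by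
        rw [Finset.sum_mul, ← Finset.sum_sub_distrib]
        exact Finset.sum_congr rfl fun _ _ => by ring
    _ ≤ ∑ i, |c i| * ((1 / 2) * ∑ l, tsirelsonNorm (restr (E i l) (b i))) :=
        Finset.sum_le_sum fun i _ =>
          mul_le_mul_of_nonneg_left (hlt i).le (abs_nonneg _)
    _ = _ := by
        rw [Finset.mul_sum]
        exact Finset.sum_congr rfl fun _ _ => by ring

/-! ### Combinations with reversed geometric weights -/

lemma sum_geom_reflect {α : ℝ} {i K : ℕ} (hi : i < K) :
    (1 - α) ^ (K - 1 - i) + ∑ l ∈ Finset.Ico (i + 1) K, (1 - α) ^ (K - 1 - l) * α = 1 := by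
  have h : ∑ l ∈ Finset.Ico (i + 1) K, (1 - α) ^ (K - 1 - l) * α =
      (∑ d ∈ Finset.range (K - 1 - i), (1 - α) ^ d) * (1 - (1 - α)) := by
    rw [← Finset.sum_mul, sub_sub_cancel, Finset.sum_Ico_eq_sum_range,
      ← Finset.sum_range_reflect]
    congr 1
    have : K - (i + 1) = K - 1 - i := by omega
    rw [this]
    refine Finset.sum_congr rfl fun d hd => ?_
    rw [Finset.mem_range] at hd
    congr 1
    omega
  rw [h, geom_sum_mul_neg]
  ring

/-- The upper estimate.  Suppose that each `b l` has norm at most `1`, while its half-sums over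
any number `n` of pieces that is small relative to the support of an earlier block are at most
`α + η`.  In an admissible family whose first nonempty contribution is to `b i`, the number of
sets is bounded by `max supp (b i)`, so `b i` contributes at most `1` and each later block at
most `α + η`.  The weights `(1 - α) ^ (K - 1 - i)` make `a i + α ∑_{l > i} a l = 1` for
every `i`. -/
lemma tsirelsonNorm_geom_le (hiso : ∀ x, ‖J x‖ = tsirelsonNorm x) {α η : ℝ} (hα0 : 0 ≤ α)
    (hα1 : α ≤ 1) (hη : 0 ≤ η) (b : ℕ → ℕ →₀ ℝ) (h : ℕ → ℕ)
    (hb : ∀ i, tsirelsonNorm (b i) ≤ 1)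
    (hlt : ∀ i, ∀ j ∈ (b i).support, j < h i)
    (hle : ∀ i l, i < l → ∀ j ∈ (b l).support, h i ≤ j)
    (hA : ∀ i l, i < l → ∀ n ≤ h i, splitNorm n (b l) ≤ α + η) (K : ℕ) :
    tsirelsonNorm (∑ i ∈ Finset.range K, (1 - α) ^ (K - 1 - i) • b i) ≤ 1 + K * η := by
  have ha0 : ∀ i, 0 ≤ (1 - α) ^ (K - 1 - i) := fun i => pow_nonneg (by linarith) _
  have ha1 : ∀ i, (1 - α) ^ (K - 1 - i) ≤ 1 := fun i => pow_le_one₀ (by linarith) (by linarith)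
  have hKη : 0 ≤ K * η := by positivity
  refine tsirelsonNorm_le (fun j => ?_) fun n E hn hE => ?_
  · rw [Finsupp.finsetSum_apply]
    by_cases hj : ∃ i ∈ Finset.range K, j ∈ (b i).support
    · obtain ⟨i, hi, hij⟩ := hj
      rw [Finset.sum_eq_single_of_mem i hi, Finsupp.smul_apply, smul_eq_mul, abs_mul,
        abs_of_nonneg (ha0 i)]
      · have h1 := (abs_le_tsirelsonNorm (b i) j).trans (hb i)
        have := mul_le_mul (ha1 i) h1 (abs_nonneg _) zero_le_one
        linarith
      · intro l _ hl
        have : b l j = 0 := by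
          by_contra hne
          have hlj := Finsupp.mem_support_iff.2 hne
          rcases lt_or_gt_of_ne hl with h' | h'
          · exact absurd (hlt l j hlj) (not_lt.2 (hle l i h' j hij))
          · exact absurd (hlt i j hij) (not_lt.2 (hle i l h' j hlj))
        simp [this]
    · push Not at hj
      rw [Finset.sum_eq_zero]
      · simp
        linarith
      · intro i hi
        simp [Finsupp.notMem_support_iff.1 (hj i hi)]
  · have hsplit : (1 / 2) * ∑ t, tsirelsonNorm (restr (E t)
          (∑ i ∈ Finset.range K, (1 - α) ^ (K - 1 - i) • b i)) ≤
        ∑ i ∈ Finset.range K, (1 - α) ^ (K - 1 - i) *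
          ((1 / 2) * ∑ t, tsirelsonNorm (restr (E t) (b i))) := by
      have : ∀ t, tsirelsonNorm (restr (E t)
          (∑ i ∈ Finset.range K, (1 - α) ^ (K - 1 - i) • b i)) ≤
          ∑ i ∈ Finset.range K, (1 - α) ^ (K - 1 - i) * tsirelsonNorm (restr (E t) (b i)) := by
        intro t
        rw [restr_sum]
        refine (tsirelsonNorm_sum_le hiso _ _).trans (le_of_eq ?_)
        refine Finset.sum_congr rfl fun i _ => ?_
        rw [restr_smul, tsirelsonNorm_smul hiso, abs_of_nonneg (ha0 i)]
      calc _ ≤ (1 / 2) * ∑ t, ∑ i ∈ Finset.range K,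
            (1 - α) ^ (K - 1 - i) * tsirelsonNorm (restr (E t) (b i)) := by
            gcongr with t
            exact this t
        _ = _ := by
            rw [Finset.sum_comm, Finset.mul_sum]
            refine Finset.sum_congr rfl fun i _ => ?_
            rw [← Finset.mul_sum]
            ring
    refine hsplit.trans ?_
    have hz0 : tsirelsonNorm 0 = 0 := by rw [← hiso]; simp
    have hzero : ∀ i, (¬ ∃ t, ∃ j ∈ E t, j ∈ (b i).support) →
        (1 / 2) * ∑ t, tsirelsonNorm (restr (E t) (b i)) = 0 := by
      intro i hi
      push Not at hi
      rw [Finset.sum_eq_zero, mul_zero]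
      intro t _
      rw [restr_eq_zero (fun j hj hjt => hi t j hjt hj), hz0]
    by_cases hex : ∃ i, i < K ∧ ∃ t, ∃ j ∈ E t, j ∈ (b i).support
    · classical
      -- `i` is the first block met by the family
      obtain ⟨i, ⟨hiK, t, j, hjt, hji⟩, hmin⟩ :
          ∃ i, (i < K ∧ ∃ t, ∃ j ∈ E t, j ∈ (b i).support) ∧
            ∀ i' < i, ¬ (i' < K ∧ ∃ t, ∃ j ∈ E t, j ∈ (b i').support) :=
        ⟨Nat.find hex, Nat.find_spec hex, fun _ => Nat.find_min hex⟩
      have hni : n ≤ h i := (hE.2 t j hjt).trans (hlt i j hji).le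
      rw [Finset.range_eq_Ico, ← Finset.sum_Ico_consecutive _ (Nat.zero_le i) hiK.le,
        Finset.sum_eq_zero, zero_add, Finset.sum_eq_sum_Ico_succ_bot hiK]
      · have h1 : (1 / 2) * ∑ t, tsirelsonNorm (restr (E t) (b i)) ≤ 1 :=
          (split_le_tsirelsonNorm (b i) hn hE).trans (hb i)
        have h2 : ∀ l ∈ Finset.Ico (i + 1) K, (1 - α) ^ (K - 1 - l) *
            ((1 / 2) * ∑ t, tsirelsonNorm (restr (E t) (b l))) ≤
            (1 - α) ^ (K - 1 - l) * α + η := by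
          intro l hl
          have h3 := (le_splitNorm (b l) hE.1).trans
            (hA i l (by have := (Finset.mem_Ico.1 hl).1; omega) n hni)
          have h4 := mul_le_mul_of_nonneg_left h3 (ha0 l)
          have h5 := mul_le_mul_of_nonneg_right (ha1 l) hη
          linarith
        have h6 := Finset.sum_le_sum h2
        rw [Finset.sum_add_distrib, Finset.sum_const, Nat.card_Ico, nsmul_eq_mul] at h6
        have h7 : ((K - (i + 1) : ℕ) : ℝ) * η ≤ K * η := by
          gcongr
          omega
        have h8 := mul_le_mul_of_nonneg_left h1 (ha0 i)
        have h9 := sum_geom_reflect (α := α) hiK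
        linarith
      · intro l hl
        have hl' := (Finset.mem_Ico.1 hl).2
        rw [hzero l (fun hh => hmin l hl' ⟨hl'.trans hiK, hh⟩), mul_zero]
    · rw [Finset.sum_eq_zero]
      · linarith
      · intro i hi
        rw [hzero i (fun hh => hex ⟨i, Finset.mem_range.1 hi, hh⟩), mul_zero]

/-- The lower estimate: the last `M` blocks of the weighted sum. -/
lemma le_splitNorm_geom (hiso : ∀ x, ‖J x‖ = tsirelsonNorm x) {α β : ℝ}
    (hα1 : α ≤ 1) (b : ℕ → ℕ →₀ ℝ) (h : ℕ → ℕ)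
    (hlt : ∀ i, ∀ j ∈ (b i).support, j < h i)
    (hle : ∀ i l, i < l → ∀ j ∈ (b l).support, h i ≤ j)
    {K M m : ℕ} (hMK : M ≤ K) (hβ : ∀ i, β ≤ splitNorm m (b i)) :
    (∑ d ∈ Finset.range M, (1 - α) ^ d) * β ≤
      splitNorm (M * m) (∑ i ∈ Finset.range K, (1 - α) ^ (K - 1 - i) • b i) := by
  have ha0 : ∀ d : ℕ, 0 ≤ (1 - α) ^ d := fun i => pow_nonneg (by linarith) _
  have key := sum_splitNorm_le hiso (M := M) (m := m)
    (∑ i ∈ Finset.range K, (1 - α) ^ (K - 1 - i) • b i)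
    (fun i => (b (K - M + i)).support) (fun i => (1 - α) ^ (M - 1 - i))
    (fun i => b (K - M + i))
    (fun i j hij p hp q hq => by
      have h1 : K - M + (i : ℕ) < K - M + j := by
        have := Fin.lt_def.1 hij
        omega
      exact (hlt _ p hp).trans_le (hle _ _ h1 q hq))
    (fun i => by
      have hi := i.2
      rw [restr_sum, Finset.sum_eq_single_of_mem (K - M + i) (Finset.mem_range.2 (by omega)),
        restr_smul, restr_eq_self subset_rfl]
      · congr 2
        omega
      · intro l _ hl
        rw [restr_smul, restr_eq_zero, smul_zero]
        intro j hj hj'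
        rcases lt_or_gt_of_ne hl with h' | h'
        · exact absurd (hlt _ j hj) (not_lt.2 (hle _ _ h' j hj'))
        · exact absurd (hlt _ j hj') (not_lt.2 (hle _ _ h' j hj)))
  refine le_trans ?_ key
  rw [Finset.sum_mul, Fin.sum_univ_eq_sum_range
    (fun i => |(1 - α) ^ (M - 1 - i)| * splitNorm m (b (K - M + i))) M,
    ← Finset.sum_range_reflect]
  refine Finset.sum_le_sum fun i _ => ?_
  rw [abs_of_nonneg (ha0 _)]
  exact mul_le_mul_of_nonneg_left (hβ _) (ha0 _)

lemma splitNorm_le_card (m : ℕ) (x : ℕ →₀ ℝ) : splitNorm m x ≤ m * tsirelsonNorm x := by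
  have h0 : 0 ≤ m * tsirelsonNorm x := mul_nonneg (Nat.cast_nonneg _) (tsirelsonNorm_nonneg x)
  refine Real.sSup_le ?_ h0
  rintro r ⟨E, -, rfl⟩
  have h : ∑ i, tsirelsonNorm (restr (E i) x) ≤ ∑ _i : Fin m, tsirelsonNorm x :=
    Finset.sum_le_sum fun i _ => tsirelsonNorm_restr_le _ _
  rw [Finset.sum_const, Finset.card_univ, Fintype.card_fin, nsmul_eq_mul] at h
  linarith

/-! ### Almost-blocks in an infinite-dimensional subspace -/

/-- A separated bounded sequence in `X` has two terms that almost agree on the first `N`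
coordinates; their difference, normalized, is close to a vector supported on `[N, ∞)`. -/
lemma exists_almost_block (hiso : ∀ x, ‖J x‖ = tsirelsonNorm x)
    (hdense : DenseRange fun c => J c) (X : Subspace ℝ V) (hinf : ¬ FiniteDimensional ℝ X)
    (N : ℕ) {ε : ℝ} (hε : 0 < ε) :
    ∃ v ∈ X, ∃ b : ℕ →₀ ℝ, tsirelsonNorm b = 1 ∧ (∀ j ∈ b.support, N ≤ j) ∧
      ‖v - J b‖ ≤ ε := by
  obtain ⟨R, f, -, hfR, hsep⟩ := exists_seq_norm_le_one_le_norm_sub hinf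
  set δ : ℝ := min ε 1 / 6 with hδ
  have hδ0 : 0 < δ := by positivity
  have hδε : 6 * δ ≤ ε := by rw [hδ]; linarith [min_le_left ε 1]
  have hδ1 : 6 * δ ≤ 1 := by rw [hδ]; linarith [min_le_right ε 1]
  have happ : ∀ k, ∃ c : ℕ →₀ ℝ, ‖(f k : V) - J c‖ < δ := fun k => by
    obtain ⟨c, hc⟩ := hdense.exists_dist_lt (f k : V) hδ0
    exact ⟨c, by rwa [dist_eq_norm] at hc⟩
  choose c hc using happ
  have hcR : ∀ k i, |c k i| ≤ R + δ := fun k i => by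
    have h1 := abs_le_tsirelsonNorm (c k) i
    have h2 : ‖J (c k)‖ ≤ ‖(f k : V)‖ + ‖(f k : V) - J (c k)‖ := by
      have := norm_sub_le (f k : V) ((f k : V) - J (c k))
      rwa [sub_sub_cancel] at this
    have h3 : ‖(f k : V)‖ ≤ R := hfR k
    rw [hiso] at h2
    linarith [hc k]
  obtain ⟨u, -, φ, hφ, hu⟩ := (isCompact_univ_pi (fun _ : ℕ =>
    isCompact_Icc (a := -(R + δ)) (b := R + δ))).tendsto_subseq
    (x := fun k i => c k i) (fun k i _ => abs_le.1 (hcR k i))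
  have hhead : ∀ x : ℕ →₀ ℝ, J (restr (Finset.range N) x) =
      ∑ i ∈ Finset.range N, x i • J (Finsupp.single i 1) := by
    intro x
    have : restr (Finset.range N) x = ∑ i ∈ Finset.range N, x i • Finsupp.single i (1 : ℝ) := by
      ext j
      simp [restr_apply, Finsupp.finsetSum_apply, Finsupp.single_apply]
    rw [this, map_sum]
    simp_rw [map_smul]
  have hconv : Filter.Tendsto (fun k => J (restr (Finset.range N) (c (φ k)))) Filter.atTop
      (nhds (∑ i ∈ Finset.range N, u i • J (Finsupp.single i 1))) := by
    simp_rw [hhead]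
    refine tendsto_finsetSum _ fun i _ => Filter.Tendsto.smul_const ?_ _
    exact (tendsto_pi_nhds.1 hu) i
  obtain ⟨n, hn⟩ := Metric.cauchySeq_iff.1 hconv.cauchySeq δ hδ0
  have hclose := hn n le_rfl (n + 1) (Nat.le_succ n)
  rw [dist_eq_norm, ← map_sub] at hclose
  have hne : φ n ≠ φ (n + 1) := (hφ (Nat.lt_succ_self n)).ne
  set p := φ n
  set q := φ (n + 1)
  set e : ℕ →₀ ℝ := restr (Finset.range N) (c p) - restr (Finset.range N) (c q) with he
  set d : ℕ →₀ ℝ := c p - c q - e with hd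
  have hdsupp : ∀ j ∈ d.support, N ≤ j := by
    intro j hj
    by_contra hlt
    refine (Finsupp.mem_support_iff.1 hj) ?_
    have : j ∈ Finset.range N := Finset.mem_range.2 (not_le.1 hlt)
    simp [hd, he, restr_apply, Finset.mem_range.1 this]
  have herr : ‖((f p : V) - f q) - J d‖ ≤ 3 * δ := by
    have : ((f p : V) - f q) - J d = ((f p : V) - J (c p)) - ((f q : V) - J (c q)) + J e := by
      rw [hd, map_sub, map_sub]
      abel
    rw [this]
    have h1 := norm_add_le (((f p : V) - J (c p)) - ((f q : V) - J (c q))) (J e)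
    have h2 := norm_sub_le ((f p : V) - J (c p)) ((f q : V) - J (c q))
    linarith [hc p, hc q]
  have hs : 1 / 2 ≤ ‖J d‖ := by
    have h1 : 1 ≤ ‖(f p : V) - f q‖ := hsep hne
    have h2 := norm_sub_norm_le ((f p : V) - f q) (J d)
    linarith
  have hs0 : 0 < ‖J d‖ := by linarith
  refine ⟨‖J d‖⁻¹ • ((f p : V) - f q), X.smul_mem _ (X.sub_mem (f p).2 (f q).2),
    ‖J d‖⁻¹ • d, ?_, ?_, ?_⟩
  · rw [tsirelsonNorm_smul hiso, ← hiso, abs_of_pos (inv_pos.2 hs0), inv_mul_cancel₀ hs0.ne']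
  · intro j hj
    exact hdsupp j (Finsupp.support_smul hj)
  · rw [map_smul, ← smul_sub, norm_smul, norm_inv, norm_norm, inv_mul_le_iff₀ hs0]
    nlinarith

/-! ### Vectors normed by boundedly many pieces -/

/-- There are vectors close to `X`, of norm almost `1` and supported arbitrarily far out, whose
norm is attained up to `1 / (n + 1) ^ 2` on a number of pieces `m n` that does not depend on the
vector, simultaneously for all `n ≤ k`. -/
lemma exists_good_vectors (hiso : ∀ x, ‖J x‖ = tsirelsonNorm x)
    (hdense : DenseRange fun c => J c) (X : Subspace ℝ V) (hinf : ¬ FiniteDimensional ℝ X) :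
    ∃ m : ℕ → ℕ, ∀ k N : ℕ, ∃ v ∈ X, ∃ z : ℕ →₀ ℝ, (∀ j ∈ z.support, N ≤ j) ∧
      ‖v - J z‖ ≤ 1 / ((k : ℝ) + 1) ^ 2 ∧ tsirelsonNorm z ≤ 1 + 1 / ((k : ℝ) + 1) ^ 2 ∧
      ∀ n ≤ k, 1 - 1 / ((n : ℝ) + 1) ^ 2 ≤ splitNorm (m n) z := by
  choose y₀ hy₀X b₀ hb₀1 hb₀supp hy₀b using fun k : ℕ =>
    exists_almost_block hiso hdense X hinf k (ε := 1 / ((k : ℝ) + 1)) (by positivity)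
  -- pass to a subsequence along which every `splitNorm m` converges
  obtain ⟨α', -, φ, hφ, hlim₀⟩ := (isCompact_univ_pi (fun m : ℕ =>
    isCompact_Icc (a := (0 : ℝ)) (b := m))).tendsto_subseq
    (x := fun k m => splitNorm m (b₀ k)) (fun k m _ => ⟨splitNorm_nonneg _ _, by
      simpa [hb₀1] using splitNorm_le_card m (b₀ k)⟩)
  set y : ℕ → V := fun k => y₀ (φ k) with hy
  set b : ℕ → ℕ →₀ ℝ := fun k => b₀ (φ k) with hbdef
  have hlim : ∀ m, Filter.Tendsto (fun k => splitNorm m (b k)) Filter.atTop (nhds (α' m)) :=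
    fun m => (tendsto_pi_nhds.1 hlim₀) m
  have hyX : ∀ k, y k ∈ X := fun k => hy₀X _
  have hb1 : ∀ k, tsirelsonNorm (b k) = 1 := fun k => hb₀1 _
  have hbsupp : ∀ k, ∀ j ∈ (b k).support, k ≤ j := fun k j hj =>
    (hφ.id_le k).trans (hb₀supp _ j hj)
  have hyb : ∀ k, ‖y k - J (b k)‖ ≤ 1 / ((k : ℝ) + 1) := fun k =>
    (hy₀b (φ k)).trans (one_div_le_one_div_of_le (by positivity) (by
      have : (k : ℝ) ≤ φ k := by exact_mod_cast hφ.id_le k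
      linarith))
  have hα'1 : ∀ m, α' m ≤ 1 := fun m => by
    refine le_of_tendsto (hlim m) ?_
    filter_upwards [Filter.eventually_ge_atTop m] with k hk
    rw [← hb1 k]
    exact splitNorm_le fun j hj => hk.trans (hbsupp k j hj)
  have hbdd : BddAbove (Set.range α') := ⟨1, by rintro _ ⟨m, rfl⟩; exact hα'1 m⟩
  set α : ℝ := ⨆ m, α' m with hα
  have hα'α : ∀ m, α' m ≤ α := fun m => le_ciSup hbdd m
  have hα1 : α ≤ 1 := ciSup_le hα'1
  have hα0 : 1 / 2 ≤ α := by
    refine (hα'α 1).trans' (ge_of_tendsto' (hlim 1) fun k => ?_)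
    simpa [hb1] using half_le_splitNorm_one (b k)
  -- `M` blocks with `m` pieces each give accuracy `1 / (n + 1) ^ 2`
  have hacc : ∀ n : ℕ, ∃ M m : ℕ, ∃ β : ℝ, β < α' m ∧
      1 - 1 / ((n : ℝ) + 1) ^ 2 ≤ (∑ d ∈ Finset.range M, (1 - α) ^ d) * β := by
    intro n
    have hτ : 0 < 1 / ((n : ℝ) + 1) ^ 2 := by positivity
    obtain ⟨M, hM⟩ := exists_pow_lt_of_lt_one (half_pos hτ) (show 1 - α < 1 by linarith)
    have hgeom := geom_sum_mul_neg (1 - α) M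
    rw [sub_sub_cancel] at hgeom
    set s : ℝ := ∑ d ∈ Finset.range M, (1 - α) ^ d
    have hs0 : 0 ≤ s := Finset.sum_nonneg fun d _ => pow_nonneg (by linarith) _
    have hs2 : s ≤ 2 := by
      have : 0 ≤ (1 - α) ^ M := pow_nonneg (by linarith) _
      nlinarith
    obtain ⟨m, hm⟩ := exists_lt_of_lt_ciSup
      (show α - 1 / ((n : ℝ) + 1) ^ 2 / 4 < ⨆ m, α' m by rw [← hα]; linarith)
    exact ⟨M, m, _, hm, by nlinarith⟩
  choose M m β hβ hacc using hacc
  refine ⟨fun n => M n * m n, fun k N => ?_⟩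
  set τ : ℝ := 1 / ((k : ℝ) + 1) ^ 2 with hτ
  have hτ0 : 0 < τ := by positivity
  set K : ℕ := (Finset.range (k + 1)).sup M with hK
  have hMK : ∀ n ≤ k, M n ≤ K := fun n hn =>
    Finset.le_sup (Finset.mem_range.2 (Nat.lt_succ_of_le hn))
  set η : ℝ := τ / (K + 1) with hη
  have hη0 : 0 < η := by positivity
  have hKη : K * η ≤ τ := by
    rw [hη, mul_div_assoc', div_le_iff₀ (by positivity)]
    nlinarith
  -- a starting index beyond which all the blocks are good enough
  have hstart : ∀ᶠ i in Filter.atTop, ∀ n ∈ Finset.range (k + 1),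
      β n < splitNorm (m n) (b i) :=
    (Filter.eventually_all_finset _).2 fun n _ => (hlim (m n)).eventually_const_lt (hβ n)
  have hsmall : ∀ᶠ i : ℕ in Filter.atTop, 1 / ((i : ℝ) + 1) < η :=
    tendsto_one_div_add_atTop_nhds_zero_nat.eventually_lt_const hη0
  obtain ⟨i₀, hi₀⟩ := Filter.eventually_atTop.1
    ((hstart.and hsmall).and (Filter.eventually_ge_atTop N))
  set top : ℕ → ℕ := fun i => (b i).support.sup id + 1 with htop
  have hlt_top : ∀ i, ∀ j ∈ (b i).support, j < top i := fun i j hj =>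
    Nat.lt_succ_of_le (Finset.le_sup (f := id) hj)
  have hstep : ∀ i, ∃ i', i < i' ∧ top i ≤ i' ∧ ∀ l ≥ i', ∀ n ∈ Finset.range (top i + 1),
      splitNorm n (b l) < α + η := by
    intro i
    have h1 : ∀ᶠ l in Filter.atTop, ∀ n ∈ Finset.range (top i + 1),
        splitNorm n (b l) < α + η :=
      (Filter.eventually_all_finset _).2 fun n _ =>
        (hlim n).eventually_lt_const (by linarith [hα'α n])
    obtain ⟨i', h⟩ := Filter.eventually_atTop.1 h1
    exact ⟨max i' (max (i + 1) (top i)),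
      lt_of_lt_of_le (Nat.lt_succ_self i) (by simp), by simp,
      fun l hl => h l (le_trans (le_max_left _ _) hl)⟩
  choose next hnext_lt hnext_top hnext using hstep
  set ψ : ℕ → ℕ := fun i => next^[i] i₀ with hψ
  have hψsucc : ∀ i, ψ (i + 1) = next (ψ i) := fun i => Function.iterate_succ_apply' next i i₀
  have hψmono : StrictMono ψ := strictMono_nat_of_lt_succ fun i => by
    rw [hψsucc]
    exact hnext_lt _
  have hψ0 : ∀ i, i₀ ≤ ψ i := fun i => hψmono.monotone (Nat.zero_le i)
  have hψnext : ∀ i l, i < l → next (ψ i) ≤ ψ l := fun i l hil => by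
    rw [← hψsucc]
    exact hψmono.monotone hil
  have hlt : ∀ i, ∀ j ∈ (b (ψ i)).support, j < top (ψ i) := fun i => hlt_top _
  have hle : ∀ i l, i < l → ∀ j ∈ (b (ψ l)).support, top (ψ i) ≤ j := fun i l hil j hj =>
    ((hnext_top _).trans (hψnext i l hil)).trans (hbsupp _ j hj)
  have ha0 : ∀ d : ℕ, 0 ≤ (1 - α) ^ d := fun i => pow_nonneg (by linarith) _
  have ha1 : ∀ d : ℕ, (1 - α) ^ d ≤ 1 := fun i => pow_le_one₀ (by linarith) (by linarith)
  refine ⟨∑ i ∈ Finset.range K, (1 - α) ^ (K - 1 - i) • y (ψ i),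
    X.sum_mem fun i _ => X.smul_mem _ (hyX _),
    ∑ i ∈ Finset.range K, (1 - α) ^ (K - 1 - i) • b (ψ i), ?_, ?_, ?_, ?_⟩
  · intro j hj
    obtain ⟨i, -, hi⟩ := Finset.mem_biUnion.1 (Finsupp.support_finsetSum hj)
    exact ((hi₀ _ (hψ0 i)).2).trans (hbsupp _ j (Finsupp.support_smul hi))
  · rw [map_sum, ← Finset.sum_sub_distrib]
    refine (norm_sum_le_of_le (f := fun i => (1 - α) ^ (K - 1 - i) • y (ψ i) -
      J ((1 - α) ^ (K - 1 - i) • b (ψ i))) _ (n := fun _ => η) fun i _ => ?_).trans ?_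
    · rw [map_smul, ← smul_sub, norm_smul, Real.norm_of_nonneg (ha0 _)]
      have h1 := (hyb (ψ i)).trans (hi₀ _ (hψ0 i)).1.2.le
      have := mul_le_mul (ha1 (K - 1 - i)) h1 (norm_nonneg _) zero_le_one
      linarith
    · simpa using hKη
  · refine (tsirelsonNorm_geom_le hiso (by linarith) hα1 hη0.le (fun i => b (ψ i))
      (fun i => top (ψ i)) (fun i => (hb1 _).le) hlt hle ?_ K).trans (by linarith)
    intro i l hil n hn
    exact (hnext (ψ i) (ψ l) (hψnext i l hil) n (Finset.mem_range.2 (by omega))).le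
  · intro n hn
    exact (hacc n).trans (le_splitNorm_geom hiso hα1 (fun i => b (ψ i)) (fun i => top (ψ i))
      hlt hle (hMK n hn) fun i =>
        ((hi₀ _ (hψ0 i)).1.1 n (Finset.mem_range.2 (by omega))).le)

/-! ### The `ℓ₁` spreading model -/

lemma norm_sum_single_ellOne (s : Finset ℕ) (a : ℕ → ℝ) :
    ‖∑ i ∈ s, a i • (lp.single 1 i (1 : ℝ) : lp (fun _ : ℕ => ℝ) 1)‖ = ∑ i ∈ s, |a i| := by
  have h := lp.norm_sum_single (E := fun _ : ℕ => ℝ) (p := 1) (by simp) a s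
  simp only [ENNReal.toReal_one, Real.rpow_one, Real.norm_eq_abs] at h
  rw [← h]
  congr 1
  refine Finset.sum_congr rfl fun i _ => ?_
  rw [← lp.single_smul, smul_eq_mul, mul_one]

lemma norm_sum_fin_single_ellOne {n : ℕ} (a : Fin n → ℝ) :
    ‖∑ i, a i • (lp.single 1 (i : ℕ) (1 : ℝ) : lp (fun _ : ℕ => ℝ) 1)‖ = ∑ i, |a i| := by
  have h := norm_sum_single_ellOne (Finset.range n)
    (fun i => if h : i < n then a ⟨i, h⟩ else 0)
  rw [← Fin.sum_univ_eq_sum_range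
      (fun i => (if h : i < n then a ⟨i, h⟩ else 0) •
        (lp.single 1 i (1 : ℝ) : lp (fun _ : ℕ => ℝ) 1)) n,
    ← Fin.sum_univ_eq_sum_range (fun i => |if h : i < n then a ⟨i, h⟩ else 0|) n] at h
  simpa using h

lemma isBasicSeq_ellOne :
    IsBasicSeq fun i : ℕ => (lp.single 1 i (1 : ℝ) : lp (fun _ : ℕ => ℝ) 1) := by
  refine ⟨1, fun m n hmn a => ?_⟩
  rw [norm_sum_single_ellOne, norm_sum_single_ellOne, one_mul]
  exact Finset.sum_le_sum_of_subset_of_nonneg (Finset.range_mono hmn) fun _ _ _ => abs_nonneg _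

/-- If the blocks `z k` with `k ≥ n` are normed up to `1 / (n + 1) ^ 2` by `m n` pieces and avoid
the first `n * m n` coordinates, then the pieces of any `n` of them form one admissible family.
Hence `n` such blocks, and the nearby vectors `v k`, span `ℓ₁` almost isometrically. -/
lemma hasL1SpreadingModel_of_blocks (hiso : ∀ x, ‖J x‖ = tsirelsonNorm x) (m : ℕ → ℕ)
    (v : ℕ → V) (z : ℕ → ℕ →₀ ℝ)
    (hsucc : ∀ k l, k < l → ∀ p ∈ (z k).support, ∀ q ∈ (z l).support, p < q)
    (hfar : ∀ n k : ℕ, n ≤ k → ∀ j ∈ (z k).support, n * m n ≤ j)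
    (hvz : ∀ k, ‖v k - J (z k)‖ ≤ 1 / ((k : ℝ) + 1) ^ 2)
    (hz : ∀ k, tsirelsonNorm (z k) ≤ 1 + 1 / ((k : ℝ) + 1) ^ 2)
    (hsplit : ∀ n k : ℕ, n ≤ k → 1 - 1 / ((n : ℝ) + 1) ^ 2 ≤ splitNorm (m n) (z k)) :
    HasL1SpreadingModel v := by
  refine ⟨lp (fun _ : ℕ => ℝ) 1, inferInstance, inferInstance, inferInstance,
    fun i => lp.single 1 i (1 : ℝ), ⟨isBasicSeq_ellOne, fun n => 3 * (1 / ((n : ℝ) + 1)),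
      fun n => by positivity, fun n n' hn => ?_, ?_, ?_⟩,
    fun n a => norm_sum_fin_single_ellOne a⟩
  · have : (n : ℝ) ≤ n' := by exact_mod_cast hn
    dsimp only
    gcongr
  · simpa using (tendsto_one_div_add_atTop_nhds_zero_nat (𝕜 := ℝ)).const_mul 3
  intro n a ha k hk hnk
  rw [norm_sum_fin_single_ellOne]
  set τ : ℝ := 1 / ((n : ℝ) + 1) ^ 2 with hτ
  have hτ0 : 0 < τ := by positivity
  have hτk : ∀ i, 1 / ((k i : ℝ) + 1) ^ 2 ≤ τ := fun i => by
    have : (n : ℝ) ≤ k i := by exact_mod_cast hnk i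
    rw [hτ]
    gcongr
  have hsumτ : ∑ i, |a i| * τ ≤ n * τ := by
    have : ∑ i, |a i| * τ ≤ ∑ _i : Fin n, τ := Finset.sum_le_sum fun i _ => by
      have := mul_le_mul_of_nonneg_right (ha i) hτ0.le
      linarith
    simpa using this
  have hnτ : 2 * (n * τ) < 3 * (1 / ((n : ℝ) + 1)) := by
    rw [hτ]
    field_simp
    nlinarith
  -- replacing `v` by the blocks costs at most `n * τ`
  have hpert : ‖∑ i, a i • v (k i) - J (∑ i, a i • z (k i))‖ ≤ n * τ := by
    rw [map_sum, ← Finset.sum_sub_distrib]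
    refine (norm_sum_le_of_le (f := fun i => a i • v (k i) - J (a i • z (k i))) _
      (n := fun i => |a i| * τ) fun i _ => ?_).trans hsumτ
    rw [map_smul, ← smul_sub, norm_smul, Real.norm_eq_abs]
    exact mul_le_mul_of_nonneg_left ((hvz _).trans (hτk i)) (abs_nonneg _)
  have hup : ‖J (∑ i, a i • z (k i))‖ ≤ ∑ i, |a i| + n * τ := by
    rw [hiso]
    refine (tsirelsonNorm_sum_le hiso _ _).trans ?_
    have : ∑ i, tsirelsonNorm (a i • z (k i)) ≤ ∑ i, (|a i| + |a i| * τ) :=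
      Finset.sum_le_sum fun i _ => by
        rw [tsirelsonNorm_smul hiso]
        have := mul_le_mul_of_nonneg_left ((hz (k i)).trans
          (add_le_add_right (hτk i) 1)) (abs_nonneg (a i))
        linarith
    rw [Finset.sum_add_distrib] at this
    linarith
  have hlow : ∑ i, |a i| - n * τ ≤ ‖J (∑ i, a i • z (k i))‖ := by
    rw [hiso]
    have h1 := sum_splitNorm_le hiso (M := n) (m := m n) (∑ i, a i • z (k i))
      (fun i => (z (k i)).support) a (fun i => z (k i))
      (fun i j hij => hsucc _ _ (hk hij))
      (fun i => by
        rw [restr_sum, Finset.sum_eq_single_of_mem i (Finset.mem_univ i), restr_smul,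
          restr_eq_self subset_rfl]
        intro l _ hl
        rw [restr_smul, restr_eq_zero, smul_zero]
        intro j hj hj'
        rcases lt_or_gt_of_ne hl with h' | h'
        · exact lt_irrefl _ (hsucc _ _ (hk h') j hj j hj')
        · exact lt_irrefl _ (hsucc _ _ (hk h') j hj' j hj))
    have h2 : splitNorm (n * m n) (∑ i, a i • z (k i)) ≤
        tsirelsonNorm (∑ i, a i • z (k i)) := splitNorm_le fun j hj => by
      obtain ⟨i, -, hi⟩ := Finset.mem_biUnion.1 (Finsupp.support_finsetSum hj)
      exact hfar n (k i) (hnk i) j (Finsupp.support_smul hi)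
    have h3 : ∑ i, (|a i| - |a i| * τ) ≤ ∑ i, |a i| * splitNorm (m n) (z (k i)) :=
      Finset.sum_le_sum fun i _ => by
        have := mul_le_mul_of_nonneg_left (hsplit n (k i) (hnk i)) (abs_nonneg (a i))
        linarith
    rw [Finset.sum_sub_distrib] at h3
    linarith
  have h1 := abs_norm_sub_norm_le (∑ i, a i • v (k i)) (J (∑ i, a i • z (k i)))
  rw [abs_le] at h1
  rw [abs_lt]
  constructor <;> linarith

end

/-- Let `𝕋` be (any realization of) Tsirelson's space, i.e. a Banach space in which
the finitely supported sequences embed linearly and isometrically (w.r.t. the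
Tsirelson norm) with dense range.  Every infinite-dimensional closed subspace `X` of
`𝕋` contains a sequence having a spreading model `1`-equivalent to the unit vector
basis of `ℓ₁`. -/
theorem stmt10 (𝕋 : Type*) [NormedAddCommGroup 𝕋] [NormedSpace ℝ 𝕋] [CompleteSpace 𝕋]
    (J : (ℕ →₀ ℝ) →ₗ[ℝ] 𝕋) (hiso : ∀ x, ‖J x‖ = tsirelsonNorm x)
    (hdense : DenseRange fun c => J c)
    (X : Subspace ℝ 𝕋) (hclosed : IsClosed (X : Set 𝕋))
    (hinf : ¬ FiniteDimensional ℝ X) :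
    ∃ x : ℕ → 𝕋, (∀ i, x i ∈ X) ∧ HasL1SpreadingModel x := by
  obtain ⟨m, hm⟩ := exists_good_vectors hiso hdense X hinf
  choose v hvX z hzsupp hvz hz hsplit using hm
  -- `lo k` is a lower bound for the support of the `k`-th block: it lies beyond the previous
  -- block and beyond `n * m n` for all `n ≤ k`
  let far : ℕ → ℕ := fun k => (Finset.range (k + 1)).sup fun n => n * m n
  let top : ℕ → ℕ → ℕ := fun k N => (z k N).support.sup id + 1
  let lo : ℕ → ℕ := fun k => Nat.rec (far 0)
    (fun k N => max (max N (top k N)) (far (k + 1))) k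
  have hlosucc : ∀ k, lo (k + 1) = max (max (lo k) (top k (lo k))) (far (k + 1)) := fun _ => rfl
  have hlomono : Monotone lo := monotone_nat_of_le_succ fun k => by
    rw [hlosucc]
    exact (le_max_left _ _).trans (le_max_left _ _)
  have hlofar : ∀ k, far k ≤ lo k := fun k => by
    cases k with
    | zero => exact le_rfl
    | succ k =>
      rw [hlosucc]
      exact le_max_right _ _
  refine ⟨fun k => v k (lo k), fun k => hvX _ _,
    hasL1SpreadingModel_of_blocks hiso m _ (fun k => z k (lo k)) ?_ ?_
      (fun k => hvz _ _) (fun k => hz _ _) (fun n k hnk => hsplit _ _ n hnk)⟩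
  · intro k l hkl p hp q hq
    have h1 : p < top k (lo k) := Nat.lt_succ_of_le (Finset.le_sup (f := id) hp)
    have h2 : top k (lo k) ≤ lo (k + 1) := by
      rw [hlosucc]
      exact (le_max_right _ _).trans (le_max_left _ _)
    exact (h1.trans_le h2).trans_le ((hlomono hkl).trans (hzsupp l (lo l) q hq))
  · intro n k hnk j hj
    have h1 : n * m n ≤ far k :=
      Finset.le_sup (f := fun n => n * m n) (Finset.mem_range.2 (Nat.lt_succ_of_le hnk))
    exact (h1.trans (hlofar k)).trans (hzsupp k (lo k) j hj)
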